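/- Let q ≥ 2 and let Θ be the linear map on V_[A] determined by Θ(A_{σ,σ·τ}) = Σ_{σ̂∈N_τ∩C_σ} A_{σ̂,iσ̂·τ} − Σ_{σ̂∈N_τ∩N_σ} A_{σ̂,iσ̂·τ} for τ ∈ σ_q and σ ∈ C_τ. Then Θ has trivial kernel and maps pairwise orthogonal vectors of V_[A] to pairwise orthogonal vectors; consequently Θ is a linear isomorphism from V_[A] onto V^⊥_{adj}, the orthogonal complement of V_{adj} inside V_{A} (in particular dim V^⊥_{adj} = dim V_[A]). -/

import Mathlib

open Matrix MeasureTheory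
open scoped Kronecker

noncomputable section

namespace CliffordPaper

/-- The single-qubit Pauli matrices `1, X, Y, Z`. -/
def pauli1 : Fin 4 → Matrix (Fin 2) (Fin 2) ℂ :=
  ![1, !![0, 1; 1, 0], !![0, -Complex.I; Complex.I, 0], !![1, 0; 0, -1]]

/-- Index type for the computational basis of `q` qubits. -/
abbrev Idx (q : ℕ) := Fin q → Fin 2

/-- The space `M_d` of `d × d` complex matrices, `d = 2^q`. -/
abbrev Mat (q : ℕ) := Matrix (Idx q) (Idx q) ℂ

/-- The space `M_d ⊗ M_d`, realized as matrices indexed by the product index set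
(the tensor factors combine via the Kronecker product `⊗ₖ`). -/
abbrev BMat (q : ℕ) := Matrix (Idx q × Idx q) (Idx q × Idx q) ℂ

/-- The `q`-fold Kronecker product of single-qubit Paulis with labels `a`. -/
def PauliOp {q : ℕ} (a : Fin q → Fin 4) : Mat q :=
  Matrix.of fun x y => ∏ i, pauli1 (a i) (x i) (y i)

/-- `√d` as a complex number, where `d = 2^q`. -/
def sqrtd (q : ℕ) : ℂ := (Real.sqrt (2 ^ q) : ℝ)

/-- The set `σ̂_q` of normalized Pauli operators. -/
def sigmaHat (q : ℕ) : Set (Mat q) :=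
  {M | ∃ a : Fin q → Fin 4, M = (sqrtd q)⁻¹ • PauliOp a}

/-- The normalized identity `σ₀ = 1/√d`. -/
def sigma0 (q : ℕ) : Mat q := (sqrtd q)⁻¹ • (1 : Mat q)

/-- `σ_q = σ̂_q \ {σ₀}`. -/
def sigmaSet (q : ℕ) : Set (Mat q) := sigmaHat q \ {sigma0 q}

/-- `N_τ`: the normalized nonidentity Paulis anticommuting with `τ`. -/
def NSet {q : ℕ} (τ : Mat q) : Set (Mat q) :=
  {σ | σ ∈ sigmaSet q ∧ σ * τ + τ * σ = 0}

/-- `C_τ`: the normalized nonidentity Paulis distinct from `τ` commuting with `τ`. -/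
def CSet {q : ℕ} (τ : Mat q) : Set (Mat q) :=
  {σ | σ ∈ sigmaSet q ∧ σ ≠ τ ∧ σ * τ = τ * σ}

/-- `Ĉ_τ`: the normalized Paulis commuting with `τ`. -/
def CHatSet {q : ℕ} (τ : Mat q) : Set (Mat q) :=
  {σ | σ ∈ sigmaHat q ∧ σ * τ = τ * σ}

/-- The normalized product `σ·τ = √d στ`. -/
def nprod {q : ℕ} (σ τ : Mat q) : Mat q := sqrtd q • (σ * τ)

/-- The Clifford normalizer `𝒩_q`: unitaries mapping normalized Paulis to
signed normalized Paulis under conjugation. -/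
def Cliff (q : ℕ) : Set (Mat q) :=
  {U | U ∈ Matrix.unitaryGroup (Idx q) ℂ ∧
    ∀ σ ∈ sigmaHat q, ∃ τ ∈ sigmaHat q, U * σ * Uᴴ = τ ∨ U * σ * Uᴴ = -τ}

/-- The two-copy representation `φ⊗²(U) : A ⊗ B ↦ (UAU†) ⊗ (UBU†)`, extended linearly. -/
def twoCopy {q : ℕ} (U : Mat q) : BMat q →ₗ[ℂ] BMat q where
  toFun M := (U ⊗ₖ U) * M * (U ⊗ₖ U)ᴴ
  map_add' M N := by
    show (U ⊗ₖ U) * (M + N) * (U ⊗ₖ U)ᴴ = (U ⊗ₖ U) * M * (U ⊗ₖ U)ᴴ + (U ⊗ₖ U) * N * (U ⊗ₖ U)ᴴ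
    rw [Matrix.mul_add, Matrix.add_mul]
  map_smul' c M := by
    show (U ⊗ₖ U) * (c • M) * (U ⊗ₖ U)ᴴ = c • ((U ⊗ₖ U) * M * (U ⊗ₖ U)ᴴ)
    rw [Matrix.mul_smul, Matrix.smul_mul]

/-- The Hilbert–Schmidt inner product `⟨A, B⟩ = tr(A† B)`. -/
def hs {q : ℕ} (A B : BMat q) : ℂ := (Aᴴ * B).trace

/-- A subspace is invariant under the two-copy representation of `𝒩_q`. -/
def IsInvariant (q : ℕ) (W : Submodule ℂ (BMat q)) : Prop :=
  ∀ U ∈ Cliff q, ∀ v ∈ W, twoCopy U v ∈ W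

/-- A nonzero invariant subspace carries an irreducible subrepresentation. -/
def CarriesIrred (q : ℕ) (W : Submodule ℂ (BMat q)) : Prop :=
  W ≠ ⊥ ∧ IsInvariant q W ∧ ∀ W' ≤ W, IsInvariant q W' → W' = ⊥ ∨ W' = W

/-- Two invariant subspaces carry equivalent subrepresentations: there is a linear
isomorphism between them intertwining the two-copy representation. -/
def EquivRep (q : ℕ) (W W' : Submodule ℂ (BMat q)) : Prop :=
  ∃ T : BMat q →ₗ[ℂ] BMat q, Submodule.map T W = W' ∧
    (∀ x ∈ W, T x = 0 → x = 0) ∧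
    ∀ U ∈ Cliff q, ∀ x ∈ W, T (twoCopy U x) = twoCopy U (T x)

/-- `S_{σ,τ} = (σ⊗τ + τ⊗σ)/√2`. -/
def SVec {q : ℕ} (σ τ : Mat q) : BMat q :=
  ((Real.sqrt 2 : ℂ))⁻¹ • (σ ⊗ₖ τ + τ ⊗ₖ σ)

/-- `A_{σ,τ} = (σ⊗τ − τ⊗σ)/√2`. -/
def AVec {q : ℕ} (σ τ : Mat q) : BMat q :=
  ((Real.sqrt 2 : ℂ))⁻¹ • (σ ⊗ₖ τ - τ ⊗ₖ σ)

/-- The trivial sector `V_id`. -/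
def Vid (q : ℕ) : Submodule ℂ (BMat q) :=
  Submodule.span ℂ {sigma0 q ⊗ₖ sigma0 q}

/-- The right adjoint sector `V_r`. -/
def Vr (q : ℕ) : Submodule ℂ (BMat q) :=
  Submodule.span ℂ {M | ∃ τ ∈ sigmaSet q, M = sigma0 q ⊗ₖ τ}

/-- The left adjoint sector `V_l`. -/
def Vl (q : ℕ) : Submodule ℂ (BMat q) :=
  Submodule.span ℂ {M | ∃ τ ∈ sigmaSet q, M = τ ⊗ₖ sigma0 q}

/-- The diagonal sector `V_d`. -/
def Vdiag (q : ℕ) : Submodule ℂ (BMat q) :=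
  Submodule.span ℂ {M | ∃ τ ∈ sigmaSet q, M = τ ⊗ₖ τ}

/-- The symmetric commuting sector `V_[S]`. -/
def VScom (q : ℕ) : Submodule ℂ (BMat q) :=
  Submodule.span ℂ {M | ∃ τ ∈ sigmaSet q, ∃ σ ∈ CSet τ, M = SVec σ τ}

/-- The symmetric anti-commuting sector `V_{S}`. -/
def VSanti (q : ℕ) : Submodule ℂ (BMat q) :=
  Submodule.span ℂ {M | ∃ τ ∈ sigmaSet q, ∃ σ ∈ NSet τ, M = SVec σ τ}

/-- The antisymmetric commuting sector `V_[A]`. -/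
def VAcom (q : ℕ) : Submodule ℂ (BMat q) :=
  Submodule.span ℂ {M | ∃ τ ∈ sigmaSet q, ∃ σ ∈ CSet τ, M = AVec σ τ}

/-- The antisymmetric anti-commuting sector `V_{A}`. -/
def VAanti (q : ℕ) : Submodule ℂ (BMat q) :=
  Submodule.span ℂ {M | ∃ τ ∈ sigmaSet q, ∃ σ ∈ NSet τ, M = AVec σ τ}

/-- `V_[A]` presented with the spanning vectors `A_{σ,σ·τ}`, `σ ∈ C_τ`. -/
def VAcom' (q : ℕ) : Submodule ℂ (BMat q) :=
  Submodule.span ℂ {M | ∃ τ ∈ sigmaSet q, ∃ σ ∈ CSet τ, M = AVec σ (nprod σ τ)}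

/-- `V_0 = span{Σ_{σ∈σ_q} σ⊗σ}`. -/
def V0diag (q : ℕ) : Submodule ℂ (BMat q) :=
  Submodule.span ℂ {∑ᶠ σ ∈ sigmaSet q, σ ⊗ₖ σ}

/-- `V_1`, the "positive" part of the diagonal sector. -/
def V1diag (q : ℕ) : Submodule ℂ (BMat q) :=
  Submodule.span ℂ {v | ∃ lam : Mat q → ℂ,
    v = ∑ᶠ σ ∈ sigmaSet q, lam σ • (σ ⊗ₖ σ) ∧
    (∑ᶠ σ ∈ sigmaSet q, lam σ) = 0 ∧
    ∀ τ ∈ sigmaSet q, (∑ᶠ σ ∈ NSet τ, lam σ) = -((2 ^ q : ℂ) / 2) * lam τ}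

/-- `V_2`, the "negative" part of the diagonal sector. -/
def V2diag (q : ℕ) : Submodule ℂ (BMat q) :=
  Submodule.span ℂ {v | ∃ lam : Mat q → ℂ,
    v = ∑ᶠ σ ∈ sigmaSet q, lam σ • (σ ⊗ₖ σ) ∧
    (∑ᶠ σ ∈ sigmaSet q, lam σ) = 0 ∧
    ∀ τ ∈ sigmaSet q, (∑ᶠ σ ∈ NSet τ, lam σ) = ((2 ^ q : ℂ) / 2) * lam τ}

/-- `v^[adj]_τ = (2|C_τ|)^{-1/2} Σ_{σ∈C_τ} S_{σ,σ·τ}`. -/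
def vadjS {q : ℕ} (τ : Mat q) : BMat q :=
  ((Real.sqrt (2 * ((CSet τ).ncard : ℝ)) : ℂ))⁻¹ • ∑ᶠ σ ∈ CSet τ, SVec σ (nprod σ τ)

/-- `v^{adj}_τ = (2|N_τ|)^{-1/2} Σ_{σ∈N_τ} A_{σ,iσ·τ}`. -/
def vadjA {q : ℕ} (τ : Mat q) : BMat q :=
  ((Real.sqrt (2 * ((NSet τ).ncard : ℝ)) : ℂ))⁻¹ •
    ∑ᶠ σ ∈ NSet τ, AVec σ (Complex.I • nprod σ τ)

/-- The symmetric adjoint sector `V_[adj]`. -/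
def VadjS (q : ℕ) : Submodule ℂ (BMat q) :=
  Submodule.span ℂ {M | ∃ τ ∈ sigmaSet q, M = vadjS τ}

/-- The antisymmetric adjoint sector `V_{adj}`. -/
def VadjA (q : ℕ) : Submodule ℂ (BMat q) :=
  Submodule.span ℂ {M | ∃ τ ∈ sigmaSet q, M = vadjA τ}

/-- The orthogonal complement `V^⊥_{adj}` of `V_{adj}` inside `V_{A}`. -/
def VadjAperp (q : ℕ) : Submodule ℂ (BMat q) :=
  Submodule.span ℂ {v | v ∈ VAanti q ∧ ∀ w ∈ VadjA q, hs w v = 0}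

/-- `V_{1}^τ`. -/
def V1symτ (q : ℕ) (τ : Mat q) : Submodule ℂ (BMat q) :=
  Submodule.span ℂ {v | ∃ lam : Mat q → ℂ,
    v = ∑ᶠ σ ∈ NSet τ, lam σ • SVec σ (Complex.I • nprod σ τ) ∧
    ∀ ν ∈ NSet τ, (∑ᶠ σ ∈ NSet τ ∩ CSet ν, lam σ) - (∑ᶠ σ ∈ NSet τ ∩ NSet ν, lam σ)
      = ((2 ^ q : ℂ) / 2) * lam ν}

/-- `V_{2}^τ`. -/
def V2symτ (q : ℕ) (τ : Mat q) : Submodule ℂ (BMat q) :=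
  Submodule.span ℂ {v | ∃ lam : Mat q → ℂ,
    v = ∑ᶠ σ ∈ NSet τ, lam σ • SVec σ (Complex.I • nprod σ τ) ∧
    ∀ ν ∈ NSet τ, (∑ᶠ σ ∈ NSet τ ∩ CSet ν, lam σ) - (∑ᶠ σ ∈ NSet τ ∩ NSet ν, lam σ)
      = -((2 ^ q : ℂ) / 2) * lam ν}

/-- `V_{1} = ⊕_τ V_{1}^τ`. -/
def V1sym (q : ℕ) : Submodule ℂ (BMat q) := ⨆ τ ∈ sigmaSet q, V1symτ q τ

/-- `V_{2} = ⊕_τ V_{2}^τ`. -/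
def V2sym (q : ℕ) : Submodule ℂ (BMat q) := ⨆ τ ∈ sigmaSet q, V2symτ q τ

/-- The defining property of the map `Θ` on `V_[A]`. -/
def ThetaProp (q : ℕ) (Θ : BMat q →ₗ[ℂ] BMat q) : Prop :=
  ∀ τ ∈ sigmaSet q, ∀ σ ∈ CSet τ,
    Θ (AVec σ (nprod σ τ)) =
      (∑ᶠ σ' ∈ NSet τ ∩ CSet σ, AVec σ' (Complex.I • nprod σ' τ)) -
      ∑ᶠ σ' ∈ NSet τ ∩ NSet σ, AVec σ' (Complex.I • nprod σ' τ)

/-- `V` = span of off-diagonal products `σ⊗σ̂`, `σ ≠ σ̂`. -/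
def Voff (q : ℕ) : Submodule ℂ (BMat q) :=
  Submodule.span ℂ {M | ∃ σ ∈ sigmaSet q, ∃ σ' ∈ sigmaSet q, σ ≠ σ' ∧ M = σ ⊗ₖ σ'}

/-- `V^τ` = span of the `σ⊗σ̂` with `σ·σ̂ ∈ {τ, −τ, iτ, −iτ}`. -/
def Vtau (q : ℕ) (τ : Mat q) : Submodule ℂ (BMat q) :=
  Submodule.span ℂ {M | ∃ σ ∈ sigmaSet q, ∃ σ' ∈ sigmaSet q,
    (nprod σ σ' = τ ∨ nprod σ σ' = -τ ∨ nprod σ σ' = Complex.I • τ ∨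
      nprod σ σ' = -(Complex.I • τ)) ∧ M = σ ⊗ₖ σ'}



/-! ### Index-level combinatorics of Pauli labels -/

/-- product of labels -/
def px1 (x y : Fin 4) : Fin 4 := x ^^^ y

/-- commutation sign of single-qubit labels -/
def ep1 (x y : Fin 4) : ℂ := if x = 0 ∨ y = 0 ∨ x = y then 1 else -1

/-- phase of single-qubit products -/
def w1 : Fin 4 → Fin 4 → ℂ :=
  ![![1, 1, 1, 1], ![1, 1, Complex.I, -Complex.I], ![1, -Complex.I, 1, Complex.I],
    ![1, Complex.I, -Complex.I, 1]]

lemma pauli1_mul (x y : Fin 4) : pauli1 x * pauli1 y = w1 x y • pauli1 (px1 x y) := by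
  fin_cases x <;> fin_cases y <;> ext i j <;> fin_cases i <;> fin_cases j <;>
    simp [pauli1, w1, px1, Matrix.mul_apply, Fin.sum_univ_two, Matrix.one_apply]

lemma pauli1_herm (x : Fin 4) (i j : Fin 2) : star (pauli1 x j i) = pauli1 x i j := by
  fin_cases x <;> fin_cases i <;> fin_cases j <;> simp [pauli1, Matrix.one_apply]

lemma pauli1_trace (x : Fin 4) : ∑ i, pauli1 x i i = if x = 0 then 2 else 0 := by
  fin_cases x <;> simp [pauli1, Fin.sum_univ_two]

lemma w1_conj (x y : Fin 4) : star (w1 x y) = ep1 x y * w1 x y := by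
  fin_cases x <;> fin_cases y <;> simp [w1, ep1]

lemma w1_mul (x y : Fin 4) : w1 x y * w1 (px1 x y) y = 1 := by
  fin_cases x <;> fin_cases y <;> simp [w1, px1]

lemma w1_swap (x y : Fin 4) : w1 x y = ep1 x y * w1 y x := by
  fin_cases x <;> fin_cases y <;> simp [w1, ep1]

lemma w1_self (x : Fin 4) : w1 x x = 1 := by
  fin_cases x <;> simp [w1]

lemma ep1_sq (x y : Fin 4) : ep1 x y * ep1 x y = 1 := by
  unfold ep1; split_ifs <;> norm_num

lemma ep1_comm (x y : Fin 4) : ep1 x y = ep1 y x := by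
  unfold ep1; congr 1; grind

lemma ep1_self (x : Fin 4) : ep1 x x = 1 := by simp [ep1]

lemma ep1_add (x y z : Fin 4) : ep1 (px1 x y) z = ep1 x z * ep1 y z := by
  fin_cases x <;> fin_cases y <;> fin_cases z <;> simp [ep1, px1]

lemma ep1_sum (y : Fin 4) : ∑ x, ep1 x y = if y = 0 then 4 else 0 := by
  fin_cases y <;> simp [ep1, Fin.sum_univ_four]

lemma px1_eq_zero : ∀ x y : Fin 4, px1 x y = 0 ↔ x = y := by unfold px1; decide
lemma px1_comm : ∀ x y : Fin 4, px1 x y = px1 y x := by unfold px1; decide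
lemma px1_cancel : ∀ x y : Fin 4, px1 (px1 x y) y = x := by unfold px1; decide
lemma px1_zero : ∀ x : Fin 4, px1 x 0 = x := by unfold px1; decide

section Helpers

variable {q : ℕ}

/-- Labels of Pauli operators. -/
abbrev Lab (q : ℕ) := Fin q → Fin 4

/-- product of labels -/
def px (a b : Lab q) : Lab q := fun i => px1 (a i) (b i)
/-- commutation sign -/
def ep (a b : Lab q) : ℂ := ∏ i, ep1 (a i) (b i)
/-- phase -/
def ww (a b : Lab q) : ℂ := ∏ i, w1 (a i) (b i)

lemma px_eq_zero (a b : Lab q) : px a b = 0 ↔ a = b := by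
  simp [funext_iff, px, px1_eq_zero]
lemma px_comm (a b : Lab q) : px a b = px b a := funext fun _ => px1_comm _ _
lemma px_cancel (a b : Lab q) : px (px a b) b = a := funext fun _ => px1_cancel _ _
lemma px_zero (a : Lab q) : px a 0 = a := funext fun _ => px1_zero _
lemma zero_px (a : Lab q) : px 0 a = a := by rw [px_comm, px_zero]

lemma px_eq_iff (a b t : Lab q) : px a b = t ↔ b = px a t := by
  constructor
  · rintro rfl; rw [px_comm a b, px_comm, px_cancel]
  · rintro rfl; rw [px_comm a t, px_comm, px_cancel]

lemma ep_sq (a b : Lab q) : ep a b * ep a b = 1 := by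
  simp [ep, ← Finset.prod_mul_distrib, ep1_sq]
lemma ep_comm (a b : Lab q) : ep a b = ep b a := by
  simp [ep, fun i => ep1_comm (a i) (b i)]
lemma ep_self (a : Lab q) : ep a a = 1 := by simp [ep, ep1_self]
lemma ep_add (a b c : Lab q) : ep (px a b) c = ep a c * ep b c := by
  simp [ep, ← Finset.prod_mul_distrib, px, ep1_add]
lemma ep_add' (a b c : Lab q) : ep c (px a b) = ep c a * ep c b := by
  rw [ep_comm, ep_add, ep_comm a, ep_comm b]
lemma ep_zero (a : Lab q) : ep 0 a = 1 := by simp [ep, ep1]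
lemma ep_zero' (a : Lab q) : ep a 0 = 1 := by simp [ep, ep1]
lemma ep_cases (a b : Lab q) : ep a b = 1 ∨ ep a b = -1 := mul_self_eq_one_iff.1 (ep_sq a b)

lemma star_ep (a b : Lab q) : star (ep a b) = ep a b := by
  rcases ep_cases a b with h | h <;> simp [h]

lemma ep_sum (c : Lab q) : ∑ a : Lab q, ep a c = if c = 0 then (4 : ℂ) ^ q else 0 := by
  have : ∑ a : Lab q, ep a c = ∏ i, ∑ x, ep1 x (c i) := by
    rw [Finset.prod_univ_sum]; simp [ep, Fintype.piFinset_univ]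
  rw [this]
  simp only [ep1_sum]
  split_ifs with h
  · subst h; simp
  · obtain ⟨i, hi⟩ := Function.ne_iff.1 h
    exact Finset.prod_eq_zero (Finset.mem_univ i) (by simpa using hi)

lemma ww_conj (a b : Lab q) : star (ww a b) = ep a b * ww a b := by
  simp only [ww, ep, ← Finset.prod_mul_distrib, ← w1_conj]
  simp [star_prod]
lemma ww_mul (a b : Lab q) : ww a b * ww (px a b) b = 1 := by
  simp [ww, ← Finset.prod_mul_distrib, px, w1_mul]
lemma ww_swap (a b : Lab q) : ww a b = ep a b * ww b a := by
  simp only [ww, ep, ← Finset.prod_mul_distrib, ← w1_swap]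
lemma ww_self (a : Lab q) : ww a a = 1 := by simp [ww, w1_self]
lemma ww_ne (a b : Lab q) : ww a b ≠ 0 := left_ne_zero_of_mul_eq_one (ww_mul a b)
lemma ww_norm (a b : Lab q) : star (ww a b) * ww a b = 1 := by
  have h1 := ww_mul a b
  have : ∀ x y : Fin 4, star (w1 x y) * w1 x y = 1 := by
    intro x y; fin_cases x <;> fin_cases y <;> simp [w1]
  simp only [ww, star_prod, ← Finset.prod_mul_distrib, this, Finset.prod_const_one]
lemma ww_px (a t : Lab q) : ww (px a t) t = star (ww a t) := by
  have h1 := ww_mul a t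
  have h2 := ww_norm a t
  apply mul_left_cancel₀ (ww_ne a t)
  rw [h1, mul_comm, h2]

/-! ### Pauli operators -/

lemma PauliOp_mul (a b : Lab q) : PauliOp a * PauliOp b = ww a b • PauliOp (px a b) := by
  ext x y
  have : ∀ i, w1 (a i) (b i) * pauli1 (px a b i) (x i) (y i)
      = ∑ z, pauli1 (a i) (x i) z * pauli1 (b i) z (y i) := by
    intro i
    have := congrFun (congrFun (pauli1_mul (a i) (b i)) (x i)) (y i)
    rw [Matrix.mul_apply] at this
    rw [this]; rfl
  simp only [Matrix.mul_apply, PauliOp, Matrix.of_apply, Matrix.smul_apply, smul_eq_mul, ww,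
    ← Finset.prod_mul_distrib, this]
  rw [Finset.prod_univ_sum]; simp [Fintype.piFinset_univ]

lemma PauliOp_herm (a : Lab q) : (PauliOp a)ᴴ = PauliOp a := by
  ext x y
  simp only [Matrix.conjTranspose_apply, PauliOp, Matrix.of_apply, star_prod, pauli1_herm]

lemma PauliOp_trace (a : Lab q) : (PauliOp a).trace = if a = 0 then (2 : ℂ) ^ q else 0 := by
  have : (PauliOp a).trace = ∏ i, ∑ x, pauli1 (a i) x x := by
    rw [Finset.prod_univ_sum]; simp [Matrix.trace, PauliOp, Fintype.piFinset_univ]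
  rw [this]
  simp only [pauli1_trace]
  split_ifs with h
  · subst h; simp
  · obtain ⟨i, hi⟩ := Function.ne_iff.1 h
    exact Finset.prod_eq_zero (Finset.mem_univ i) (by simpa using hi)

lemma PauliOp_zero : PauliOp (0 : Lab q) = 1 := by
  ext x y
  simp only [PauliOp, Matrix.of_apply, Pi.zero_apply, pauli1, Matrix.cons_val_zero,
    Matrix.one_apply]
  split_ifs with h
  · subst h; simp
  · obtain ⟨i, hi⟩ := Function.ne_iff.1 h
    exact Finset.prod_eq_zero (Finset.mem_univ i) (by simp [hi])

lemma sqrtd_sq : sqrtd q * sqrtd q = 2 ^ q := by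
  unfold sqrtd
  rw [← Complex.ofReal_mul, Real.mul_self_sqrt (by positivity)]; simp
lemma sqrtd_ne : sqrtd q ≠ 0 := by
  intro h; have := sqrtd_sq (q := q); rw [h, zero_mul] at this
  exact absurd this.symm (pow_ne_zero q two_ne_zero)
lemma sqrtd_star : star (sqrtd q) = sqrtd q := by simp [sqrtd]

/-- normalized Pauli with label `a` -/
def pp (a : Lab q) : Mat q := (sqrtd q)⁻¹ • PauliOp a

lemma pp_mul (a b : Lab q) : pp a * pp b = ((sqrtd q)⁻¹ * ww a b) • pp (px a b) := by
  simp only [pp, Matrix.smul_mul, Matrix.mul_smul, PauliOp_mul, smul_smul]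
  congr 1; ring

lemma pp_nprod (a b : Lab q) : nprod (pp a) (pp b) = ww a b • pp (px a b) := by
  rw [nprod, pp_mul, smul_smul, ← mul_assoc, mul_inv_cancel₀ sqrtd_ne, one_mul]

lemma pp_herm (a : Lab q) : (pp a)ᴴ = pp a := by
  simp [pp, Matrix.conjTranspose_smul, PauliOp_herm, sqrtd_star, -Complex.star_def]

lemma pp_ip (a b : Lab q) : ((pp a)ᴴ * pp b).trace = if a = b then 1 else 0 := by
  rw [pp_herm, pp_mul, Matrix.trace_smul, pp, Matrix.trace_smul, PauliOp_trace]
  simp only [px_eq_zero]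
  split_ifs with h
  · subst h
    rw [ww_self, ← sqrtd_sq]; have := sqrtd_ne (q := q)
    simp only [smul_eq_mul]; field_simp
  · simp

lemma pp_inj : Function.Injective (pp (q := q)) := by
  intro a b h
  by_contra hab
  have h1 := pp_ip a b
  rw [← h, pp_ip] at h1
  simp [hab] at h1

lemma pp_ne (a : Lab q) : pp a ≠ 0 := by
  intro h; have := pp_ip a a; rw [h] at this; simp at this

lemma pp_comm (a b : Lab q) : pp a * pp b = ep a b • (pp b * pp a) := by
  rw [pp_mul, pp_mul, px_comm, ww_swap, smul_smul]; congr 1; ring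

lemma sigmaHat_eq : sigmaHat q = Set.range pp := by
  ext M; simp [sigmaHat, pp, eq_comm]

lemma sigma0_eq : sigma0 q = pp 0 := by simp [sigma0, pp, PauliOp_zero]

lemma mem_sigmaSet (M : Mat q) : M ∈ sigmaSet q ↔ ∃ a : Lab q, a ≠ 0 ∧ M = pp a := by
  simp only [sigmaSet, sigmaHat_eq, sigma0_eq, Set.mem_sdiff, Set.mem_range, Set.mem_singleton_iff]
  constructor
  · rintro ⟨⟨a, rfl⟩, h⟩; exact ⟨a, fun h' => h (by rw [h']), rfl⟩
  · rintro ⟨a, h, rfl⟩; exact ⟨⟨a, rfl⟩, fun h' => h (pp_inj h')⟩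

lemma pp_mul_ne (a b : Lab q) : pp a * pp b ≠ 0 := by
  rw [pp_mul]
  exact smul_ne_zero (mul_ne_zero (inv_ne_zero sqrtd_ne) (ww_ne _ _)) (pp_ne _)

lemma anti_iff (a b : Lab q) : pp a * pp b + pp b * pp a = 0 ↔ ep a b = -1 := by
  have h0 := pp_mul_ne b a
  have : ep a b • (pp b * pp a) + pp b * pp a = (ep a b + 1) • (pp b * pp a) := by
    rw [add_smul, one_smul]
  rw [pp_comm a b, this, smul_eq_zero]
  simp only [h0, or_false]
  exact add_eq_zero_iff_eq_neg

lemma com_iff (a b : Lab q) : pp a * pp b = pp b * pp a ↔ ep a b = 1 := by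
  have h0 := pp_mul_ne b a
  rw [pp_comm a b, ← sub_eq_zero]
  have : ep a b • (pp b * pp a) - pp b * pp a = (ep a b - 1) • (pp b * pp a) := by
    rw [sub_smul, one_smul]
  rw [this, smul_eq_zero]
  simp only [h0, or_false]
  exact sub_eq_zero

lemma NSet_eq (t : Lab q) : NSet (pp t) = pp '' {a | ep a t = -1} := by
  ext M
  simp only [NSet, Set.mem_ofPred_eq, mem_sigmaSet, Set.mem_image]
  constructor
  · rintro ⟨⟨a, h, rfl⟩, h2⟩; exact ⟨a, (anti_iff _ _).1 h2, rfl⟩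
  · rintro ⟨a, h, rfl⟩
    refine ⟨⟨a, ?_, rfl⟩, (anti_iff _ _).2 h⟩
    rintro rfl; rw [ep_zero] at h; norm_num at h

lemma CSet_eq (t : Lab q) : CSet (pp t) = pp '' {a | a ≠ 0 ∧ a ≠ t ∧ ep a t = 1} := by
  ext M
  simp only [CSet, Set.mem_ofPred_eq, mem_sigmaSet, Set.mem_image]
  constructor
  · rintro ⟨⟨a, h, rfl⟩, h1, h2⟩
    exact ⟨a, ⟨h, fun h' => h1 (by rw [h']), (com_iff _ _).1 h2⟩, rfl⟩
  · rintro ⟨a, ⟨h, h1, h2⟩, rfl⟩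
    exact ⟨⟨a, h, rfl⟩, fun h' => h1 (pp_inj h'), (com_iff _ _).2 h2⟩

/-! ### The vectors -/

/-- `E t a = A_{σ_a, σ_a·σ_t}` -/
def EE (t a : Lab q) : BMat q := AVec (pp a) (nprod (pp a) (pp t))

lemma hs_add_left (A B C : BMat q) : hs (A + B) C = hs A C + hs B C := by
  simp [hs, Matrix.add_mul]
lemma hs_add_right (A B C : BMat q) : hs A (B + C) = hs A B + hs A C := by
  simp [hs, Matrix.mul_add]
lemma hs_smul_left (c : ℂ) (A B : BMat q) : hs (c • A) B = star c * hs A B := by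
  simp [hs]
lemma hs_smul_right (c : ℂ) (A B : BMat q) : hs A (c • B) = c * hs A B := by
  simp [hs]
lemma hs_sub_left (A B C : BMat q) : hs (A - B) C = hs A C - hs B C := by
  simp [hs, Matrix.sub_mul]
lemma hs_sub_right (A B C : BMat q) : hs A (B - C) = hs A B - hs A C := by
  simp [hs, Matrix.mul_sub]
lemma hs_zero_left (A : BMat q) : hs 0 A = 0 := by simp [hs]
lemma hs_zero_right (A : BMat q) : hs A 0 = 0 := by simp [hs]
lemma hs_sum_left {ι : Type*} (s : Finset ι) (f : ι → BMat q) (B : BMat q) :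
    hs (∑ i ∈ s, f i) B = ∑ i ∈ s, hs (f i) B := by
  simp [hs, Matrix.conjTranspose_sum, Matrix.sum_mul, Matrix.trace_sum]
lemma hs_sum_right {ι : Type*} (s : Finset ι) (f : ι → BMat q) (B : BMat q) :
    hs B (∑ i ∈ s, f i) = ∑ i ∈ s, hs B (f i) := by
  simp [hs, Matrix.mul_sum, Matrix.trace_sum]
open scoped ComplexOrder in
lemma hs_self (A : BMat q) (h : hs A A = 0) : A = 0 := by
  exact Matrix.trace_conjTranspose_mul_self_eq_zero_iff.1 h

lemma hs_kron (a b c e : Lab q) : hs (pp a ⊗ₖ pp b) (pp c ⊗ₖ pp e)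
    = (if a = c then 1 else 0) * (if b = e then 1 else 0) := by
  rw [hs, Matrix.conjTranspose_kronecker, ← Matrix.mul_kronecker_mul, Matrix.trace_kronecker,
    pp_ip, pp_ip]

lemma sqrt2_sq : ((Real.sqrt 2 : ℂ))⁻¹ * ((Real.sqrt 2 : ℂ))⁻¹ = 1 / 2 := by
  rw [← mul_inv, ← Complex.ofReal_mul, Real.mul_self_sqrt (by norm_num)]; norm_num

lemma hs_AVec (a b c e : Lab q) : hs (AVec (pp a) (pp b)) (AVec (pp c) (pp e))
    = (if a = c then 1 else 0) * (if b = e then 1 else 0)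
      - (if a = e then 1 else 0) * (if b = c then 1 else 0) := by
  have h : star ((Real.sqrt 2 : ℂ))⁻¹ = ((Real.sqrt 2 : ℂ))⁻¹ := by simp
  rw [AVec, AVec, hs_smul_left, hs_smul_right, h, ← mul_assoc, sqrt2_sq]
  simp only [hs_sub_left, hs_sub_right, hs_kron]
  ring

lemma AVec_smul (c : ℂ) (M N : Mat q) : AVec M (c • N) = c • AVec M N := by
  simp only [AVec, Matrix.kronecker_smul, Matrix.smul_kronecker, ← smul_sub]
  rw [smul_comm]

lemma AVec_swap (M N : Mat q) : AVec M N = - AVec N M := by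
  simp only [AVec, ← smul_neg, neg_sub]

lemma EE_eq (t a : Lab q) : EE t a = ww a t • AVec (pp a) (pp (px a t)) := by
  rw [EE, pp_nprod, AVec_smul]

lemma EE_px (t a : Lab q) : EE t (px a t) = -(ep a t • EE t a) := by
  rw [EE_eq, EE_eq, px_cancel, ww_px, ww_conj, AVec_swap, smul_neg, smul_smul]

lemma hs_EE (t a t' a' : Lab q) : hs (EE t a) (EE t' a')
    = (if t = t' then 1 else 0) * ((if a = a' then 1 else 0)
      - ep a t * (if a' = px a t then 1 else 0)) := by
  rw [EE_eq, EE_eq, hs_smul_left, hs_smul_right, hs_AVec]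
  by_cases h1 : a = a'
  · subst h1
    by_cases h2 : t = t'
    · subst h2
      have h3 := ww_norm a t
      have : px a t = a ↔ a = px a t := eq_comm
      simp only [this, if_true]
      split_ifs with h4
      · have : t = 0 := by
          have := (px_eq_iff a t a).1 h4.symm; rw [this]; exact (px_eq_zero a a).2 rfl
        subst this; rw [ep_zero']; ring
      · linear_combination h3
    · have h3 : px a t ≠ px a t' := by
        intro h; have := (px_eq_iff a t _).1 h
        rw [px_comm a t', px_comm, px_cancel] at this; exact h2 this
      have h4 : ¬ (a = px a t' ∧ px a t = a) := by
        rintro ⟨h, h'⟩; exact h3 (h'.trans h)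
      rw [not_and_or] at h4
      rcases h4 with h4 | h4 <;> simp [h2, h3, h4]
  · by_cases h2 : a' = px a t
    · subst h2
      by_cases h3 : t = t'
      · subst h3
        have h5 := ww_conj a t
        have h6 := ww_norm a t
        simp only [h1, px_cancel, ww_px, if_true, if_false]
        rw [h5] at h6 ⊢
        have h7 := ep_sq a t
        linear_combination (-ep a t) * h6
      · have : a ≠ px (px a t) t' := by
          intro h
          have := (px_eq_iff (px a t) t' a).1 h.symm
          rw [px_comm a t, px_cancel] at this
          exact h3 this.symm
        simp [h1, h3, this]
    · have : px a t ≠ a' := fun h => h2 h.symm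
      simp [h1, h2, this]

lemma sum_anti (t c : Lab q) : ∑ b, (1 - ep b t) / 2 * ep c b
    = ((if c = 0 then (4 : ℂ) ^ q else 0) - (if c = t then (4 : ℂ) ^ q else 0)) / 2 := by
  have h : ∀ b : Lab q, (1 - ep b t) / 2 * ep c b = (ep b c - ep b (px c t)) / 2 := by
    intro b; rw [ep_add', ep_comm c b]; ring
  simp only [h]
  rw [← Finset.sum_div, Finset.sum_sub_distrib, ep_sum, ep_sum]
  simp only [px_eq_zero]

lemma sum_com (t c : Lab q) : ∑ b, (1 + ep b t) / 2 * ep b c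
    = ((if c = 0 then (4 : ℂ) ^ q else 0) + (if c = t then (4 : ℂ) ^ q else 0)) / 2 := by
  have h : ∀ b : Lab q, (1 + ep b t) / 2 * ep b c = (ep b c + ep b (px c t)) / 2 := by
    intro b; rw [ep_add']; ring
  simp only [h]
  rw [← Finset.sum_div, Finset.sum_add_distrib, ep_sum, ep_sum]
  simp only [px_eq_zero]

/-- the image vectors -/
def GG (t a : Lab q) : BMat q :=
  ∑ b, (Complex.I * ((1 - ep b t) / 2 * ep a b)) • EE t b

lemma hs_GG (t a t' a' : Lab q) : hs (GG t a) (GG t' a')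
    = (if t = t' then 1 else 0) * ((1 + ep a' t) / 2 * ((if a = a' then (4 : ℂ) ^ q else 0)
      - (if a' = px a t then (4 : ℂ) ^ q else 0))) := by
  simp only [GG, hs_sum_left, hs_smul_left]
  simp only [hs_sum_right, hs_smul_right, hs_EE, Finset.mul_sum]
  by_cases ht : t = t'
  swap
  · simp [ht]
  subst ht
  simp only [if_true]
  have hI : ∀ b b' : Lab q,
      star (Complex.I * ((1 - ep b t) / 2 * ep a b)) *
        (Complex.I * ((1 - ep b' t) / 2 * ep a' b') *
          (1 * ((if b = b' then 1 else 0)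
            - ep b t * if b' = px b t then 1 else 0)))
      = (if b = b' then ((1 - ep b t) / 2 * ep a b) * ((1 - ep b' t) / 2 * ep a' b') else 0)
        - (if b' = px b t then ((1 - ep b t) / 2 * ep a b) * ((1 - ep b' t) / 2 * ep a' b')
            * ep b t else 0) := by
    intro b b'
    have h1 : star (Complex.I * ((1 - ep b t) / 2 * ep a b))
        = -Complex.I * ((1 - ep b t) / 2 * ep a b) := by
      rw [star_mul', star_mul', star_ep, star_div₀, star_sub, star_ep]; simp
    rw [h1]
    have hI2 := Complex.I_mul_I
    generalize ((1 - ep b t) / 2 * ep a b) = X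
    generalize ((1 - ep b' t) / 2 * ep a' b') = Y
    generalize ep b t = Z
    split_ifs
    · linear_combination (-(X * Y * (1 - Z))) * hI2
    · linear_combination (-(X * Y)) * hI2
    · linear_combination (X * Y * Z) * hI2
    · ring
  simp only [hI, Finset.sum_sub_distrib, Finset.sum_ite_eq, Finset.sum_ite_eq', Finset.mem_univ,
    if_true]
  rw [← Finset.sum_sub_distrib]
  have h2 : ∀ b : Lab q, (1 - ep b t) / 2 * ep a b * ((1 - ep b t) / 2 * ep a' b)
      - (1 - ep b t) / 2 * ep a b * ((1 - ep (px b t) t) / 2 * ep a' (px b t)) * ep b t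
      = (1 + ep a' t) * ((1 - ep b t) / 2 * ep (px a a') b) := by
    intro b
    rw [ep_add, ep_add, ep_add', ep_self]
    rcases ep_cases b t with h | h <;> rw [h] <;> ring
  simp only [h2]
  rw [← Finset.mul_sum, sum_anti]
  simp only [px_eq_iff, px_zero, eq_comm (a := a) (b := a')]
  ring

lemma sum_GG (t b : Lab q) (h : ep b t = -1) :
    ∑ a, ((1 + ep a t) / 2 * ep a b) • GG t a = (Complex.I * 4 ^ q) • EE t b := by
  simp only [GG, Finset.smul_sum, smul_smul]
  rw [Finset.sum_comm]
  have h1 : ∀ b' : Lab q, ∑ a, ((1 + ep a t) / 2 * ep a b *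
      (Complex.I * ((1 - ep b' t) / 2 * ep a b'))) • EE t b'
      = (if b' = b then (Complex.I * ((1 - ep b' t) / 2) * (4 ^ q / 2)) • EE t b' else 0)
      + (if b' = px b t then (Complex.I * ((1 - ep b' t) / 2) * (4 ^ q / 2)) • EE t b' else 0) := by
    intro b'
    rw [← Finset.sum_smul]
    have : ∀ a : Lab q, (1 + ep a t) / 2 * ep a b * (Complex.I * ((1 - ep b' t) / 2 * ep a b'))
        = Complex.I * ((1 - ep b' t) / 2) * ((1 + ep a t) / 2 * ep a (px b b')) := by
      intro a; rw [ep_add']; ring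
    simp only [this]
    rw [← Finset.mul_sum, sum_com]
    simp only [px_eq_iff, px_zero]
    split_ifs
    · rw [← add_smul]; congr 1; ring
    · simp
    · simp
    · simp
  simp only [h1, Finset.sum_add_distrib, Finset.sum_ite_eq', Finset.mem_univ, if_true]
  rw [EE_px, ep_add, ep_self, h, neg_one_smul, neg_neg, ← add_smul]
  congr 1; ring

lemma finsum_pp (S : Set (Lab q)) [DecidablePred (· ∈ S)] (f : Mat q → BMat q) :
    ∑ᶠ M ∈ pp '' S, f M = ∑ a, if a ∈ S then f (pp a) else 0 := by
  rw [finsum_mem_image pp_inj.injOn, finsum_mem_def, finsum_eq_sum_of_fintype]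
  refine Finset.sum_congr rfl fun a _ => ?_
  simp [Set.indicator]

lemma AVec_I (t b : Lab q) :
    AVec (pp b) (Complex.I • nprod (pp b) (pp t)) = Complex.I • EE t b := by
  rw [AVec_smul, EE]

open Classical in
lemma sum_N (t : Lab q) :
    ∑ᶠ σ ∈ NSet (pp t), AVec σ (Complex.I • nprod σ (pp t)) = GG t 0 := by
  rw [NSet_eq, finsum_pp, GG]
  refine Finset.sum_congr rfl fun b _ => ?_
  rw [AVec_I, ep_zero]
  rcases ep_cases b t with h | h
  · have : (1 : ℂ) ≠ -1 := by norm_num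
    simp [h, this]
  · simp only [Set.mem_ofPred_eq, h, if_true]; norm_num

open Classical in
lemma theta_rhs (t a : Lab q) (ha : a ≠ 0) (hat : a ≠ t) (h : ep a t = 1) :
    (∑ᶠ σ' ∈ NSet (pp t) ∩ CSet (pp a), AVec σ' (Complex.I • nprod σ' (pp t))) -
      ∑ᶠ σ' ∈ NSet (pp t) ∩ NSet (pp a), AVec σ' (Complex.I • nprod σ' (pp t)) = GG t a := by
  rw [NSet_eq, CSet_eq, NSet_eq, ← Set.image_inter pp_inj, ← Set.image_inter pp_inj,
    finsum_pp, finsum_pp, GG, ← Finset.sum_sub_distrib]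
  refine Finset.sum_congr rfl fun b _ => ?_
  have h11 : (1 : ℂ) ≠ -1 := by norm_num
  have h12 : (-1 : ℂ) ≠ 1 := by norm_num
  simp only [AVec_I, Set.mem_inter_iff, Set.mem_ofPred_eq]
  rcases ep_cases b t with h1 | h1
  · simp [h1, h11]
  · have hb0 : b ≠ 0 := by rintro rfl; rw [ep_zero] at h1; exact h11 h1
    have hba : b ≠ a := by rintro rfl; rw [h] at h1; exact h11 h1
    rw [ep_comm a b]
    rcases ep_cases b a with h2 | h2
    · simp [h1, h2, hb0, hba, h11]
    · simp [h1, h2, h12]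

lemma GG_t (t : Lab q) : GG t t = -GG t 0 := by
  rw [GG, GG, ← Finset.sum_neg_distrib]
  refine Finset.sum_congr rfl fun b _ => ?_
  rw [← neg_smul, ep_zero, ep_comm t b]; congr 1
  linear_combination (Complex.I / 2) * (-ep_sq b t) 

lemma GG_zero_mem (t : Lab q) (ht : t ≠ 0) : GG t 0 ∈ VadjA q := by
  have hfin : (NSet (pp t)).Finite := by rw [NSet_eq]; exact (Set.toFinite _).image _
  by_cases hn : (NSet (pp t)).ncard = 0
  · rw [Set.ncard_eq_zero hfin] at hn
    rw [← sum_N, hn]; simp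
  · have h1 : vadjA (pp t) ∈ VadjA q :=
      Submodule.subset_span ⟨pp t, (mem_sigmaSet _).2 ⟨t, ht, rfl⟩, rfl⟩
    rw [vadjA, sum_N] at h1
    refine (Submodule.smul_mem_iff _ ?_).1 h1
    apply inv_ne_zero
    have : (0 : ℝ) < (NSet (pp t)).ncard := by exact_mod_cast Nat.pos_of_ne_zero hn
    exact_mod_cast (Real.sqrt_pos.2 (by positivity)).ne'

lemma EE_anti_mem (t a : Lab q) (h : ep a t = -1) : EE t a ∈ VAanti q := by
  have h11 : (1 : ℂ) ≠ -1 := by norm_num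
  rw [EE_eq]
  refine Submodule.smul_mem _ _ (Submodule.subset_span ⟨pp (px a t), ?_, pp a, ?_, rfl⟩)
  · refine (mem_sigmaSet _).2 ⟨_, ?_, rfl⟩
    rw [Ne, px_eq_zero]; rintro rfl; rw [ep_self] at h; exact h11 h
  · rw [NSet_eq]
    refine ⟨a, ?_, rfl⟩
    simp [ep_add', ep_self, h]

lemma AVec_anti (a b : Lab q) : AVec (pp a) (pp b) = (ww a (px a b))⁻¹ • EE (px a b) a := by
  have : px a (px a b) = b := by rw [px_comm a b, px_comm, px_cancel]
  rw [EE_eq, smul_smul, inv_mul_cancel₀ (ww_ne _ _), one_smul, this]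

lemma GG_mem_anti (t a : Lab q) : GG t a ∈ VAanti q := by
  refine Submodule.sum_mem _ fun b _ => ?_
  rcases ep_cases b t with h | h
  · simp [h]
  · exact Submodule.smul_mem _ _ (EE_anti_mem t b h)

lemma VAcom'_eq : VAcom' q = Submodule.span ℂ
    {M | ∃ t a : Lab q, t ≠ 0 ∧ a ≠ 0 ∧ a ≠ t ∧ ep a t = 1 ∧ M = EE t a} := by
  unfold VAcom'
  congr 1; ext M
  simp only [Set.mem_ofPred_eq]
  constructor
  · rintro ⟨τ, hτ, σ, hσ, rfl⟩
    obtain ⟨t, ht, rfl⟩ := (mem_sigmaSet _).1 hτ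
    rw [CSet_eq] at hσ
    obtain ⟨a, ⟨h1, h2, h3⟩, rfl⟩ := hσ
    exact ⟨t, a, ht, h1, h2, h3, rfl⟩
  · rintro ⟨t, a, ht, h1, h2, h3, rfl⟩
    exact ⟨pp t, (mem_sigmaSet _).2 ⟨t, ht, rfl⟩, pp a, by
      rw [CSet_eq]; exact ⟨a, ⟨h1, h2, h3⟩, rfl⟩, rfl⟩

lemma theta_EE (Θ : BMat q →ₗ[ℂ] BMat q) (hΘ : ThetaProp q Θ) (t a : Lab q)
    (ht : t ≠ 0) (h1 : a ≠ 0) (h2 : a ≠ t) (h3 : ep a t = 1) : Θ (EE t a) = GG t a := by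
  rw [EE, hΘ (pp t) ((mem_sigmaSet _).2 ⟨t, ht, rfl⟩) (pp a)
    (by rw [CSet_eq]; exact ⟨a, ⟨h1, h2, h3⟩, rfl⟩), theta_rhs t a h1 h2 h3]

lemma theta_iso (Θ : BMat q →ₗ[ℂ] BMat q) (hΘ : ThetaProp q Θ) (x : BMat q) (hx : x ∈ VAcom' q)
    (y : BMat q) (hy : y ∈ VAcom' q) : hs (Θ x) (Θ y) = 4 ^ q * hs x y := by
  rw [VAcom'_eq] at hx hy
  induction hx using Submodule.span_induction with
  | zero => simp [hs_zero_left]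
  | add u v _ _ h1 h2 => rw [map_add, hs_add_left, hs_add_left, h1, h2]; ring
  | smul c u _ h1 => rw [map_smul, hs_smul_left, hs_smul_left, h1]; ring
  | mem x hx =>
    obtain ⟨t, a, ht, h1, h2, h3, rfl⟩ := hx
    induction hy using Submodule.span_induction with
    | zero => simp [hs_zero_right]
    | add u v _ _ h1 h2 => rw [map_add, hs_add_right, hs_add_right, h1, h2]; ring
    | smul c u _ h1 => rw [map_smul, hs_smul_right, hs_smul_right, h1]; ring
    | mem y hy =>
      obtain ⟨t', a', ht', h1', h2', h3', rfl⟩ := hy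
      rw [theta_EE Θ hΘ t a ht h1 h2 h3, theta_EE Θ hΘ t' a' ht' h1' h2' h3', hs_GG, hs_EE]
      by_cases h : t = t'
      · subst h
        rw [h3, h3']
        split_ifs <;> ring
      · simp [h]

lemma VadjA_orth (t a : Lab q) (h1 : a ≠ 0) (h2 : a ≠ t) (w : BMat q)
    (hw : w ∈ VadjA q) : hs w (GG t a) = 0 := by
  induction hw using Submodule.span_induction with
  | zero => exact hs_zero_left _
  | add u v _ _ h1 h2 => rw [hs_add_left, h1, h2, add_zero]
  | smul c u _ h1 => rw [hs_smul_left, h1, mul_zero]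
  | mem x hx =>
    obtain ⟨τ, hτ, rfl⟩ := hx
    obtain ⟨s, hs0, rfl⟩ := (mem_sigmaSet _).1 hτ
    rw [vadjA, sum_N, hs_smul_left, hs_GG, zero_px]
    by_cases h : s = t
    · subst h; simp [h1.symm, h2]
    · simp [h]

lemma anti_le (Θ : BMat q →ₗ[ℂ] BMat q) (hΘ : ThetaProp q Θ) :
    VAanti q ≤ Submodule.map Θ (VAcom' q) ⊔ VadjA q := by
  refine Submodule.span_le.2 ?_
  rintro M ⟨τ, hτ, σ, hσ, rfl⟩
  obtain ⟨b, hb, rfl⟩ := (mem_sigmaSet _).1 hτ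
  rw [NSet_eq] at hσ
  obtain ⟨a, h, rfl⟩ := hσ
  simp only [Set.mem_ofPred_eq] at h
  have h11 : (1 : ℂ) ≠ -1 := by norm_num
  show AVec (pp a) (pp b) ∈ _
  rw [AVec_anti]
  refine Submodule.smul_mem _ _ ?_
  have ht : px a b ≠ 0 := by
    rw [Ne, px_eq_zero]; rintro rfl; rw [ep_self] at h; exact h11 h
  have hat : ep a (px a b) = -1 := by rw [ep_add', ep_self, h, one_mul]
  generalize px a b = t at ht hat
  have hc : Complex.I * (4 : ℂ) ^ q ≠ 0 :=
    mul_ne_zero Complex.I_ne_zero (pow_ne_zero _ (by norm_num))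
  refine (Submodule.smul_mem_iff _ hc).1 ?_
  rw [← sum_GG t a hat]
  refine Submodule.sum_mem _ fun c _ => ?_
  rcases ep_cases c t with h1 | h1
  · refine Submodule.smul_mem _ _ ?_
    by_cases hc0 : c = 0
    · subst hc0; exact Submodule.mem_sup_right (GG_zero_mem t ht)
    by_cases hct : c = t
    · subst hct; rw [GG_t]; exact Submodule.mem_sup_right (neg_mem (GG_zero_mem c ht))
    refine Submodule.mem_sup_left ⟨EE t c, ?_, theta_EE Θ hΘ t c ht hc0 hct h1⟩
    rw [VAcom'_eq]
    exact Submodule.subset_span ⟨t, c, ht, hc0, hct, h1, rfl⟩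
  · simp [h1]

lemma mem_perp (v : BMat q) : v ∈ VadjAperp q ↔ v ∈ VAanti q ∧ ∀ w ∈ VadjA q, hs w v = 0 := by
  constructor
  · intro h
    induction h using Submodule.span_induction with
    | zero => exact ⟨zero_mem _, fun w _ => hs_zero_right w⟩
    | add u v _ _ h1 h2 =>
      exact ⟨add_mem h1.1 h2.1, fun w hw => by
        rw [hs_add_right, h1.2 w hw, h2.2 w hw, add_zero]⟩
    | smul c u _ h1 =>
      exact ⟨Submodule.smul_mem _ _ h1.1, fun w hw => by
        rw [hs_smul_right, h1.2 w hw, mul_zero]⟩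
    | mem x hx => exact hx
  · intro h; exact Submodule.subset_span h

lemma theta_map (Θ : BMat q →ₗ[ℂ] BMat q) (hΘ : ThetaProp q Θ) :
    Submodule.map Θ (VAcom' q) = VadjAperp q := by
  have hle : Submodule.map Θ (VAcom' q) ≤ VadjAperp q := by
    rw [VAcom'_eq, Submodule.map_span, Submodule.span_le]
    rintro M ⟨x, ⟨t, a, ht, h1, h2, h3, rfl⟩, rfl⟩
    rw [theta_EE Θ hΘ t a ht h1 h2 h3]
    exact (mem_perp _).2 ⟨GG_mem_anti t a, VadjA_orth t a h1 h2⟩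
  refine le_antisymm hle ?_
  intro v hv
  have hv' := (mem_perp v).1 hv
  obtain ⟨w, hw, u, hu, rfl⟩ := Submodule.mem_sup.1 (anti_le Θ hΘ hv'.1)
  have h1 := hv'.2 u hu
  rw [hs_add_right, ((mem_perp w).1 (hle hw)).2 u hu, zero_add] at h1
  rw [hs_self u h1, add_zero]
  exact hw

end Helpers

/-- `Θ` has trivial kernel on `V_[A]`, preserves orthogonality, and is a
linear isomorphism of `V_[A]` onto `V^⊥_{adj}`; in particular the dimensions agree. -/
theorem statement9 (q : ℕ) (hq : 2 ≤ q)
    (Θ : BMat q →ₗ[ℂ] BMat q) (hΘ : ThetaProp q Θ) :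
    (∀ x ∈ VAcom' q, Θ x = 0 → x = 0) ∧
    (∀ x ∈ VAcom' q, ∀ y ∈ VAcom' q, hs x y = 0 → hs (Θ x) (Θ y) = 0) ∧
    Submodule.map Θ (VAcom' q) = VadjAperp q ∧
    Module.finrank ℂ ↥(VadjAperp q) = Module.finrank ℂ ↥(VAcom' q) := by
  have hker : ∀ x ∈ VAcom' q, Θ x = 0 → x = 0 := by
    intro x hx h
    have h1 := theta_iso Θ hΘ x hx x hx
    rw [h, hs_zero_left] at h1
    refine hs_self x ?_
    rcases mul_eq_zero.1 h1.symm with h2 | h2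
    · exact absurd h2 (pow_ne_zero _ (by norm_num))
    · exact h2
  refine ⟨hker, ?_, theta_map Θ hΘ, ?_⟩
  · intro x hx y hy h
    rw [theta_iso Θ hΘ x hx y hy, h, mul_zero]
  · rw [← theta_map Θ hΘ]
    have hinj : Function.Injective (Θ.domRestrict (VAcom' q)) := by
      rw [injective_iff_map_eq_zero]
      rintro ⟨x, hx⟩ h
      exact Subtype.ext (hker x hx h)
    have := LinearMap.finrank_range_of_inj hinj
    rwa [LinearMap.range_domRestrict] at this

end CliffordPaper
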